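/- Let n, m ≥ 4 be integers and let G = P_n □ P_m be the grid. If b is an integer such that m/2 ≤ b ≤ m−1, then nb ∈ S_SC(G). -/

import Mathlib

/-!  Common definitions: oriented graphs, geodesic convexity, convexity number,
strong convexity spectrum, and grid graphs. -/

variable {V : Type*}

/-- A directed walk of length `k` from `u` to `v` along the arc relation `A`,
encoded by the function `f` listing its vertices. -/
def IsDirWalk (A : V → V → Prop) (k : ℕ) (f : ℕ → V) (u v : V) : Prop :=
  f 0 = u ∧ f k = v ∧ ∀ i, i < k → A (f i) (f (i + 1))

/-- There is a directed walk from `u` to `v`. -/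
def DirReachable (A : V → V → Prop) (u v : V) : Prop :=
  ∃ k f, IsDirWalk A k f u v

/-- A digraph (given by its arc relation) is strongly connected. -/
def StrongConnected (A : V → V → Prop) : Prop :=
  ∀ u v : V, DirReachable A u v

/-- A `uv`-geodesic: a directed walk from `u` to `v` of minimum possible length
(such a walk is automatically a directed path). -/
def IsGeodesic (A : V → V → Prop) (k : ℕ) (f : ℕ → V) (u v : V) : Prop :=
  IsDirWalk A k f u v ∧ ∀ k' f', IsDirWalk A k' f' u v → k ≤ k'

/-- A nonempty vertex set `C` is convex if every vertex lying on a geodesic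
between two vertices of `C` (in either direction) belongs to `C`. -/
def DConvex (A : V → V → Prop) (C : Set V) : Prop :=
  C.Nonempty ∧ ∀ u ∈ C, ∀ v ∈ C, ∀ k f, IsGeodesic A k f u v → ∀ i ≤ k, f i ∈ C

/-- `A` is an orientation of the simple graph `G`: every arc is along an edge,
every edge gets an arc, and no edge gets both directions. -/
def IsOrientation (G : SimpleGraph V) (A : V → V → Prop) : Prop :=
  (∀ x y, A x y → G.Adj x y) ∧ (∀ x y, G.Adj x y → A x y ∨ A y x) ∧
    (∀ x y, A x y → ¬ A y x)

/-- The convexity number of a digraph: the maximum cardinality of a proper convex set. -/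
noncomputable def convexityNumber [Fintype V] (A : V → V → Prop) : ℕ :=
  sSup {k | ∃ C : Set V, DConvex A C ∧ C ≠ Set.univ ∧ C.ncard = k}

/-- The strong convexity spectrum of a graph: the set of convexity numbers of
its strongly connected orientations. -/
def strongConvexitySpectrum [Fintype V] (G : SimpleGraph V) : Set ℕ :=
  {k | ∃ A : V → V → Prop, IsOrientation G A ∧ StrongConnected A ∧ convexityNumber A = k}

/-- The grid graph `P_n □ P_m`. -/
def gridGraph (n m : ℕ) : SimpleGraph (Fin n × Fin m) :=
  (SimpleGraph.pathGraph n).boxProd (SimpleGraph.pathGraph m)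
/-- There is a directed walk of length `k`. -/
def HasWalk {V : Type*} (A : V → V → Prop) (k : ℕ) (u v : V) : Prop :=
  ∃ f, IsDirWalk A k f u v

theorem HasWalk.refl {V : Type*} (A : V → V → Prop) (u : V) : HasWalk A 0 u u :=
  ⟨fun _ => u, rfl, rfl, fun i hi => absurd hi (Nat.not_lt_zero i)⟩

theorem IsDirWalk.append {V : Type*} {A : V → V → Prop} {k l : ℕ} {f g : ℕ → V} {u v w : V}
    (hf : IsDirWalk A k f u v) (hg : IsDirWalk A l g v w) :
    IsDirWalk A (k + l) (fun i => if i ≤ k then f i else g (i - k)) u w := by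
  obtain ⟨f0, fk, fs⟩ := hf
  obtain ⟨g0, gl, gs⟩ := hg
  refine ⟨by simp [f0], ?_, ?_⟩
  · by_cases h : l = 0
    · subst h
      simp [fk, ← gl, g0]
    · have : ¬ (k + l ≤ k) := by omega
      simp [h, gl]
  · intro i hi
    by_cases h1 : i + 1 ≤ k
    · have h2 : i ≤ k := by omega
      simp only [h1, h2, if_true]
      exact fs i (by omega)
    · by_cases h2 : i ≤ k
      · have h3 : i = k := by omega
        subst h3
        have := gs 0 (by omega)
        rw [g0] at this
        simpa [fk] using this
      · have := gs (i - k) (by omega)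
        have e : i + 1 - k = i - k + 1 := by omega
        simp only [h1, h2, if_false, e]
        exact this

theorem HasWalk.trans {V : Type*} {A : V → V → Prop} {k l : ℕ} {u v w : V}
    (hf : HasWalk A k u v) (hg : HasWalk A l v w) : HasWalk A (k + l) u w := by
  obtain ⟨f, hf⟩ := hf
  obtain ⟨g, hg⟩ := hg
  exact ⟨_, hf.append hg⟩

theorem HasWalk.single {V : Type*} {A : V → V → Prop} {u v : V} (h : A u v) :
    HasWalk A 1 u v := by
  refine ⟨fun i => if i = 0 then u else v, by simp, by simp, ?_⟩
  intro i hi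
  have : i = 0 := by omega
  subst this
  simpa using h

/-- Lower bound on the length of walks by a potential. -/
theorem IsDirWalk.potential {V : Type*} {A : V → V → Prop} (φ : V → ℤ)
    (hφ : ∀ x y, A x y → φ y ≤ φ x + 1) {k : ℕ} {f : ℕ → V} {u v : V}
    (h : IsDirWalk A k f u v) : φ v ≤ φ u + k := by
  obtain ⟨f0, fk, fs⟩ := h
  have : ∀ i, i ≤ k → φ (f i) ≤ φ u + i := by
    intro i
    induction i with
    | zero => intro _; simp [f0]
    | succ i ih =>
      intro hi
      have h1 := ih (by omega)
      have h2 := hφ _ _ (fs i (by omega))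
      push_cast
      linarith
  have := this k le_rfl
  rwa [fk] at this

/-- A vertex on a walk realizing the potential bound lies in every convex set through the ends. -/
theorem DConvex.mem_of_walk {V : Type*} {A : V → V → Prop} {S : Set V} (hS : DConvex A S)
    (φ : V → ℤ) (hφ : ∀ x y, A x y → φ y ≤ φ x + 1) {k l : ℕ} {u v w : V}
    (hu : u ∈ S) (hw : w ∈ S) (h1 : HasWalk A k u v) (h2 : HasWalk A l v w)
    (hle : φ u + k + l ≤ φ w) : v ∈ S := by
  obtain ⟨f, hf⟩ := h1
  obtain ⟨g, hg⟩ := h2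
  have := hS.2 u hu w hw (k + l) _ ⟨hf.append hg, ?_⟩ k (by omega)
  · simpa [hf.2.1] using this
  · intro k' f' h'
    have := h'.potential φ hφ
    omega

theorem exists_geodesic {V : Type*} {A : V → V → Prop} {u v : V} (h : DirReachable A u v) :
    ∃ k f, IsGeodesic A k f u v := by
  classical
  have h' : ∃ k, HasWalk A k u v := h
  obtain ⟨f, hf⟩ := Nat.find_spec h'
  exact ⟨Nat.find h', f, hf, fun k' f' hk => Nat.find_min' h' ⟨f', hk⟩⟩

/-- If a walk starts in `C` and leaves it, it uses an arc out of `C`. -/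
theorem exists_exit {V : Type*} {A : V → V → Prop} {C : Set V} {k : ℕ} {f : ℕ → V}
    (fs : ∀ i, i < k → A (f i) (f (i + 1))) {a c : ℕ} (hac : a ≤ c) (hck : c ≤ k)
    (ha : f a ∈ C) (hc : f c ∉ C) :
    ∃ i, a ≤ i ∧ i < c ∧ f i ∈ C ∧ f (i + 1) ∉ C ∧ A (f i) (f (i + 1)) := by
  induction c with
  | zero =>
    have : a = 0 := by omega
    subst this
    exact absurd ha hc
  | succ c ih =>
    by_cases h : f c ∈ C
    · have : a ≠ c + 1 := by rintro rfl; exact hc ha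
      exact ⟨c, by omega, by omega, h, hc, fs c (by omega)⟩
    · have : a ≠ c + 1 := by rintro rfl; exact hc ha
      obtain ⟨i, h1, h2, h3⟩ := ih (by omega) (by omega) h
      exact ⟨i, h1, by omega, h3⟩

/-- The arcs, in coordinates. -/
def gridR (n m b i j i' j' : ℕ) : Prop :=
  (i' = i ∧ j' = j + 1 ∧ (i = 0 ∨ (i + 1 < n ∧ j + 1 < b))) ∨
  (i' = i ∧ j = j' + 1 ∧ ¬ (i = 0 ∨ (i + 1 < n ∧ j < b))) ∨
  (j' = j ∧ i' = i + 1 ∧ (j ≠ 0 ∧ (j < b ∨ j + 1 = m))) ∨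
  (j' = j ∧ i = i' + 1 ∧ ¬ (j ≠ 0 ∧ (j < b ∨ j + 1 = m)))

/-- The orientation of the grid. -/
def gridA (n m b : ℕ) (x y : Fin n × Fin m) : Prop :=
  gridR n m b x.1.val x.2.val y.1.val y.2.val

theorem gridA_orient (n m b : ℕ) : IsOrientation (gridGraph n m) (gridA n m b) := by
  refine ⟨?_, ?_, ?_⟩
  · rintro ⟨⟨i, hi⟩, ⟨j, hj⟩⟩ ⟨⟨i', hi'⟩, ⟨j', hj'⟩⟩ h
    simp only [gridA, gridR] at h
    simp only [gridGraph, SimpleGraph.boxProd_adj, SimpleGraph.pathGraph_adj, Fin.mk.injEq]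
    omega
  · rintro ⟨⟨i, hi⟩, ⟨j, hj⟩⟩ ⟨⟨i', hi'⟩, ⟨j', hj'⟩⟩ h
    simp only [gridGraph, SimpleGraph.boxProd_adj, SimpleGraph.pathGraph_adj, Fin.mk.injEq] at h
    simp only [gridA, gridR]
    rcases h with ⟨h | h, rfl⟩ | ⟨h | h, rfl⟩ <;> omega
  · rintro ⟨⟨i, hi⟩, ⟨j, hj⟩⟩ ⟨⟨i', hi'⟩, ⟨j', hj'⟩⟩ h
    simp only [gridA, gridR] at h ⊢
    omega

/-- Walks in coordinates. -/
def gridW (n m b k i j i' j' : ℕ) : Prop :=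
  ∃ (hi : i < n) (hj : j < m) (hi' : i' < n) (hj' : j' < m),
    HasWalk (gridA n m b) k (⟨i, hi⟩, ⟨j, hj⟩) (⟨i', hi'⟩, ⟨j', hj'⟩)

theorem gridW.trans {n m b k l i j i' j' i'' j'' : ℕ} (h : gridW n m b k i j i' j')
    (h' : gridW n m b l i' j' i'' j'') : gridW n m b (k + l) i j i'' j'' := by
  obtain ⟨a1, a2, a3, a4, a⟩ := h
  obtain ⟨c1, c2, c3, c4, c⟩ := h'
  exact ⟨a1, a2, c3, c4, a.trans c⟩

theorem gridW.refl {n m b i j : ℕ} (hi : i < n) (hj : j < m) : gridW n m b 0 i j i j :=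
  ⟨hi, hj, hi, hj, HasWalk.refl _ _⟩

theorem gridW.single {n m b i j i' j' : ℕ} (hi : i < n) (hj : j < m) (hi' : i' < n)
    (hj' : j' < m) (h : gridR n m b i j i' j') : gridW n m b 1 i j i' j' :=
  ⟨hi, hj, hi', hj', HasWalk.single h⟩

theorem walk_right {n m b i j j' : ℕ} (hi : i < n) (hjj : j ≤ j') (hj' : j' < m)
    (h : i = 0 ∨ (i + 1 < n ∧ j' < b)) : gridW n m b (j' - j) i j i j' := by
  obtain ⟨k, rfl⟩ := Nat.exists_eq_add_of_le hjj
  simp only [Nat.add_sub_cancel_left]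
  induction k with
  | zero => exact gridW.refl hi hj'
  | succ k ih =>
    exact (ih (by omega) (by omega) (by omega)).trans
      (gridW.single hi (by omega) hi hj' (by unfold gridR; omega))

theorem walk_left {n m b i j j' : ℕ} (hi : i < n) (hjj : j' ≤ j) (hj : j < m)
    (h : i ≠ 0 ∧ (i + 1 = n ∨ b ≤ j' + 1)) : gridW n m b (j - j') i j i j' := by
  obtain ⟨k, rfl⟩ := Nat.exists_eq_add_of_le hjj
  simp only [Nat.add_sub_cancel_left]
  induction k with
  | zero => exact gridW.refl hi hj
  | succ k ih =>
    have := (gridW.single (b := b) (i := i) (j := j' + (k + 1)) (i' := i) (j' := j' + k)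
      hi hj hi (by omega) (by unfold gridR; omega)).trans (ih (by omega) (by omega))
    rwa [Nat.add_comm 1 k] at this

theorem walk_down {n m b i i' j : ℕ} (hii : i ≤ i') (hi' : i' < n) (hj : j < m)
    (h : j ≠ 0 ∧ (j < b ∨ j + 1 = m)) : gridW n m b (i' - i) i j i' j := by
  obtain ⟨k, rfl⟩ := Nat.exists_eq_add_of_le hii
  simp only [Nat.add_sub_cancel_left]
  induction k with
  | zero => exact gridW.refl hi' hj
  | succ k ih =>
    exact (ih (by omega) (by omega)).trans
      (gridW.single (by omega) hj hi' hj (by unfold gridR; omega))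

theorem walk_up {n m b i i' j : ℕ} (hii : i' ≤ i) (hi : i < n) (hj : j < m)
    (h : ¬ (j ≠ 0 ∧ (j < b ∨ j + 1 = m))) : gridW n m b (i - i') i j i' j := by
  obtain ⟨k, rfl⟩ := Nat.exists_eq_add_of_le hii
  simp only [Nat.add_sub_cancel_left]
  induction k with
  | zero => exact gridW.refl hi hj
  | succ k ih =>
    have := (gridW.single (b := b) (i := i' + (k + 1)) (j := j) (i' := i' + k) (j' := j)
      hi hj (by omega) hj (by unfold gridR; omega)).trans (ih (by omega) (by omega))
    rwa [Nat.add_comm 1 k] at this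

theorem reach_hub {n m b : ℕ} (hn : 2 ≤ n) (hm : b < m) (hb : 2 ≤ b) {i j : ℕ}
    (hi : i < n) (hj : j < m) : ∃ k, gridW n m b k i j 0 0 := by
  have hbot : ∀ j, j < m → 2 ≤ n → ∃ k, gridW n m b k (n - 1) j 0 0 := fun j hj h2 =>
    ⟨_, (walk_left (j' := 0) (by omega) (by omega) hj (by omega)).trans
      (walk_up (by omega) (by omega) (by omega) (by omega))⟩
  by_cases h0 : j = 0
  · subst h0
    exact ⟨_, walk_up (by omega) (by omega) (by omega) (by omega)⟩
  by_cases hd : j < b ∨ j + 1 = m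
  · obtain ⟨k, hk⟩ := hbot j hj (by omega)
    exact ⟨_, (walk_down (i' := n - 1) (by omega) (by omega) hj ⟨h0, hd⟩).trans hk⟩
  · obtain ⟨k, hk⟩ := hbot (m - 1) (by omega) (by omega)
    exact ⟨_, ((walk_up (i' := 0) (by omega) (by omega) hj (by omega)).trans
      (walk_right (j' := m - 1) (by omega) (by omega) (by omega) (by omega))).trans
      ((walk_down (i' := n - 1) (by omega) (by omega) (by omega) (by omega)).trans hk)⟩

theorem hub_reach {n m b : ℕ} (hn : 2 ≤ n) (hm : b < m) (hb : 2 ≤ b) {i j : ℕ}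
    (hi : i < n) (hj : j < m) : ∃ k, gridW n m b k 0 0 i j := by
  by_cases h0 : i = 0
  · subst h0
    exact ⟨_, walk_right (by omega) (by omega) (by omega) (by omega)⟩
  by_cases hb' : j < b
  · by_cases hj0 : j = 0
    · subst hj0
      exact ⟨_, ((walk_right (j' := 1) (by omega) (by omega) (by omega) (by omega)).trans
        (walk_down (i' := n - 1) (by omega) (by omega) (by omega) (by omega))).trans
        ((walk_left (j' := 0) (by omega) (by omega) (by omega) (by omega)).trans
        (walk_up (by omega) (by omega) (by omega) (by omega)))⟩
    · exact ⟨_, (walk_right (j' := j) (by omega) (by omega) (by omega) (by omega)).trans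
        (walk_down (by omega) (by omega) (by omega) (by omega))⟩
  · exact ⟨_, ((walk_right (j' := m - 1) (by omega) (by omega) (by omega) (by omega)).trans
        (walk_down (i' := i) (by omega) (by omega) (by omega) (by omega))).trans
        (walk_left (by omega) (by omega) (by omega) (by omega))⟩

theorem gridA_strong {n m b : ℕ} (hn : 2 ≤ n) (hm : b < m) (hb : 2 ≤ b) :
    StrongConnected (gridA n m b) := by
  rintro ⟨⟨i, hi⟩, ⟨j, hj⟩⟩ ⟨⟨i', hi'⟩, ⟨j', hj'⟩⟩
  obtain ⟨k, hk⟩ := reach_hub hn hm hb hi hj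
  obtain ⟨l, hl⟩ := hub_reach hn hm hb hi' hj'
  obtain ⟨_, _, _, _, f, hf⟩ := hk.trans hl
  exact ⟨_, f, hf⟩

/-- The left part. -/
def leftPart (n m b : ℕ) : Set (Fin n × Fin m) := {p | p.2.val < b}

theorem leftPart_ncard (n m b : ℕ) (hb : b ≤ m) : (leftPart n m b).ncard = n * b := by
  have : leftPart n m b = (Set.univ : Set (Fin n)) ×ˢ (Set.range (Fin.castLE hb)) := by
    ext ⟨i, j⟩
    simp only [leftPart, Set.mem_setOf_eq, Set.mem_prod, Set.mem_univ, true_and, Set.mem_range]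
    constructor
    · intro h
      exact ⟨⟨j, h⟩, rfl⟩
    · rintro ⟨k, rfl⟩
      exact k.2
  rw [this, Set.ncard_prod, Set.ncard_univ, ← Set.image_univ,
    Set.ncard_image_of_injective _ (Fin.castLE_injective hb), Set.ncard_univ]
  simp

theorem leftPart_convex {n m b : ℕ} (hn : 2 ≤ n) (hm : b < m) (hb : 2 ≤ b) :
    DConvex (gridA n m b) (leftPart n m b) := by
  refine ⟨⟨(⟨0, by omega⟩, ⟨0, by omega⟩), by simp [leftPart]; omega⟩, ?_⟩
  intro u hu v hv k f ⟨⟨f0, fk, fs⟩, hmin⟩ c hc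
  by_contra hcon
  obtain ⟨p, -, hp2, hp3, hp4, hp5⟩ := exists_exit fs (Nat.zero_le c) hc (f0 ▸ hu) hcon
  obtain ⟨q, hq1, hq2, hq3, hq4, hq5⟩ := exists_exit (C := (leftPart n m b)ᶜ) fs hc le_rfl hcon
    (by rw [fk]; exact fun h => h hv)
  -- lengths of the detour
  have hpot : (((f q).1.val : ℤ) - (f (p + 1)).1.val) ≤ (q - (p + 1) : ℕ) := by
    have := IsDirWalk.potential (A := gridA n m b) (fun x => (x.1.val : ℤ)) (by
      rintro ⟨⟨i, hi⟩, ⟨j, hj⟩⟩ ⟨⟨i', hi'⟩, ⟨j', hj'⟩⟩ h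
      simp only [gridA, gridR] at h ⊢
      omega) (k := q - (p + 1)) (f := fun t => f (p + 1 + t)) (u := f (p + 1)) (v := f q)
      ⟨rfl, by simp only; congr 1; omega, fun t ht => fs (p + 1 + t) (by omega)⟩
    linarith
  -- shortcut
  generalize hx : f p = x at *
  generalize hx' : f (p + 1) = x' at *
  generalize hy : f q = y at *
  generalize hy' : f (q + 1) = y' at *
  obtain ⟨⟨xi, hxi⟩, ⟨xj, hxj⟩⟩ := x
  obtain ⟨⟨xi', hxi'⟩, ⟨xj', hxj'⟩⟩ := x'
  obtain ⟨⟨yi, hyi⟩, ⟨yj, hyj⟩⟩ := y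
  obtain ⟨⟨yi', hyi'⟩, ⟨yj', hyj'⟩⟩ := y'
  simp only [leftPart, gridA, gridR, Set.mem_compl_iff, Set.mem_setOf_eq, not_not] at *
  have e1 : xi = 0 := by omega
  have e2 : xj = b - 1 := by omega
  have e3 : yj' = b - 1 := by omega
  have e4 : yi' = yi := by omega
  have e5 : xi' = 0 := by omega
  subst e1 e2 e3 e4 e5
  obtain ⟨_, _, _, _, h⟩ := walk_down (n := n) (m := m) (b := b) (i := 0) (i' := yi') (j := b - 1)
    (by omega) (by omega) (by omega) (by omega)
  have h1 : HasWalk (gridA n m b) p u (f p) := ⟨f, f0, rfl, fun i hi => fs i (by omega)⟩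
  have h2 : HasWalk (gridA n m b) (k - (q + 1)) (f (q + 1)) v :=
    ⟨fun t => f (q + 1 + t), rfl, by simp only; rw [← fk]; congr 1; omega,
      fun t ht => fs (q + 1 + t) (by omega)⟩
  rw [hx] at h1
  rw [hy'] at h2
  obtain ⟨g, hg⟩ := (h1.trans h).trans h2
  have := hmin _ g hg
  omega

/-- The potential (distance from the head of the exit arc). -/
def gridPot (n m b i j : ℕ) : ℤ :=
  if b ≤ j then
    if i = 0 then (j : ℤ) - b else (m - b - 1 : ℤ) + i + (m - 1 - j)
  else if i + 1 = n then (m - b - 1 : ℤ) + (n - 1) + (m - 1 - j)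
  else if j + 1 = b ∧ i ≠ 0 then (m - b - 1 : ℤ) + i + (m - b)
  else (m - b - 1 : ℤ) + (n - 1) + (m - 1) + (n - 1 - i) + j

theorem gridPot_step {n m b : ℕ} (hn : 2 ≤ n) (hm : b < m) (hb : 2 ≤ b)
    (x y : Fin n × Fin m) (h : gridA n m b x y) :
    gridPot n m b y.1.val y.2.val ≤ gridPot n m b x.1.val x.2.val + 1 := by
  obtain ⟨⟨i, hi⟩, ⟨j, hj⟩⟩ := x
  obtain ⟨⟨i', hi'⟩, ⟨j', hj'⟩⟩ := y
  simp only [gridA, gridR, gridPot] at *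
  split_ifs <;> omega

theorem mixed_univ {n m b : ℕ} (hn : 2 ≤ n) (hm : b < m) (hb : 2 ≤ b)
    (S : Set (Fin n × Fin m)) (hS : DConvex (gridA n m b) S) {u v : Fin n × Fin m}
    (hu : u ∈ S) (hv : v ∈ S) (huC : u ∈ leftPart n m b) (hvC : v ∉ leftPart n m b) :
    S = Set.univ := by
  -- membership in coordinates
  let M : ℕ → ℕ → Prop := fun i j => ∃ (hi : i < n) (hj : j < m), (⟨i, hi⟩, ⟨j, hj⟩) ∈ S
  have key : ∀ (φ : ℕ → ℕ → ℤ), (∀ x y : Fin n × Fin m, gridA n m b x y →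
      φ y.1.val y.2.val ≤ φ x.1.val x.2.val + 1) → ∀ {k l i j i' j' i'' j'' : ℕ},
      M i j → M i'' j'' → gridW n m b k i j i' j' → gridW n m b l i' j' i'' j'' →
      φ i j + k + l ≤ φ i'' j'' → M i' j' := by
    intro φ hφ k l i j i' j' i'' j'' h1 h2 w1 w2 hle
    obtain ⟨_, _, h1⟩ := h1
    obtain ⟨_, _, h2⟩ := h2
    obtain ⟨_, _, p3, p4, w1⟩ := w1
    obtain ⟨_, _, _, _, w2⟩ := w2
    exact ⟨p3, p4, hS.mem_of_walk (fun x => φ x.1.val x.2.val) hφ h1 h2 w1 w2 hle⟩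
  have hE : M 0 (b - 1) ∧ M 0 b := by
    obtain ⟨k, f, hf⟩ := exists_geodesic (gridA_strong hn hm hb u v)
    obtain ⟨p, -, hp2, hp3, hp4, hp5⟩ := exists_exit hf.1.2.2 (Nat.zero_le k) le_rfl
      (hf.1.1 ▸ huC) (hf.1.2.1 ▸ hvC)
    have m1 := hS.2 u hu v hv k f hf p (by omega)
    have m2 := hS.2 u hu v hv k f hf (p + 1) (by omega)
    generalize f p = x at *
    generalize f (p + 1) = x' at *
    obtain ⟨⟨xi, hxi⟩, ⟨xj, hxj⟩⟩ := x
    obtain ⟨⟨xi', hxi'⟩, ⟨xj', hxj'⟩⟩ := x'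
    simp only [leftPart, gridA, gridR, Set.mem_setOf_eq] at hp3 hp4 hp5
    have e1 : xi = 0 := by omega
    have e2 : xj = b - 1 := by omega
    have e3 : xj' = b := by omega
    have e5 : xi' = 0 := by omega
    subst e1 e2 e5
    refine ⟨⟨_, _, m1⟩, ?_⟩
    subst e3
    exact ⟨_, _, m2⟩
  obtain ⟨hE1, hE2⟩ := hE
  have s1 : ∀ j, b ≤ j → j < m → gridW n m b (j - b) 0 b 0 j := fun j h1 h2 =>
    walk_right (by omega) h1 h2 (by omega)
  have s1' : ∀ j, b ≤ j → j < m → gridW n m b (m - 1 - j) 0 j 0 (m - 1) := fun j h1 h2 =>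
    walk_right (by omega) (by omega) (by omega) (by omega)
  have s2 : ∀ i, i < n → gridW n m b (i - 0) 0 (m - 1) i (m - 1) := fun i h1 =>
    walk_down (by omega) h1 (by omega) (by omega)
  have s2' : ∀ i, i < n → gridW n m b (n - 1 - i) i (m - 1) (n - 1) (m - 1) := fun i h1 =>
    walk_down (by omega) (by omega) (by omega) (by omega)
  have s3 : ∀ j, j < m → gridW n m b (m - 1 - j) (n - 1) (m - 1) (n - 1) j := fun j h1 =>
    walk_left (by omega) (by omega) (by omega) (by omega)
  have s3' : ∀ j, j < m → gridW n m b (j - 0) (n - 1) j (n - 1) 0 := fun j h1 =>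
    walk_left (by omega) (by omega) (by omega) (by omega)
  have s4 : ∀ i, i < n → gridW n m b (n - 1 - i) (n - 1) 0 i 0 := fun i h1 =>
    walk_up (by omega) (by omega) (by omega) (by omega)
  have s4' : ∀ i, i < n → gridW n m b (i - 0) i 0 0 0 := fun i h1 =>
    walk_up (by omega) (by omega) (by omega) (by omega)
  have s5 : gridW n m b (b - 1 - 0) 0 0 0 (b - 1) :=
    walk_right (by omega) (by omega) (by omega) (by omega)
  have pE2 : gridPot n m b 0 b = 0 := by simp [gridPot]
  have pE1 : gridPot n m b 0 (b - 1) = 2 * n + 2 * m - 5 := by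
    unfold gridPot
    split_ifs <;> omega
  have kk := @key (gridPot n m b) (gridPot_step hn hm hb)
  have c1 : gridW n m b (n - 1 - 0 + (m - 1 - 0)) 0 (m - 1) (n - 1) 0 :=
    (s2' 0 (by omega)).trans (s3 0 (by omega))
  have c2 : gridW n m b (n - 1 - 0 + (b - 1 - 0)) (n - 1) 0 0 (b - 1) :=
    (s4 0 (by omega)).trans s5
  have c0 := s1 (m - 1) (by omega) (by omega)
  have r1 : ∀ j, b ≤ j → j < m → M 0 j := fun j h1 h2 =>
    kk hE2 hE1 (s1 j h1 h2) ((s1' j h1 h2).trans (c1.trans c2)) (by rw [pE2, pE1]; omega)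
  have r2 : ∀ i, i < n → M i (m - 1) := fun i h1 =>
    kk hE2 hE1 (c0.trans (s2 i h1)) ((s2' i h1).trans ((s3 0 (by omega)).trans c2))
      (by rw [pE2, pE1]; omega)
  have r3 : ∀ j, j < m → M (n - 1) j := fun j h1 =>
    kk hE2 hE1 ((c0.trans (s2 (n - 1) (by omega))).trans (s3 j h1)) ((s3' j h1).trans c2)
      (by rw [pE2, pE1]; omega)
  have r4 : ∀ i, i < n → M i 0 := fun i h1 =>
    kk hE2 hE1 ((c0.trans c1).trans (s4 i h1)) ((s4' i h1).trans s5)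
      (by rw [pE2, pE1]; omega)
  ext ⟨⟨i, hi⟩, ⟨j, hj⟩⟩
  simp only [Set.mem_univ, iff_true]
  suffices h : M i j from h.2.2
  by_cases hjb : j < b
  · by_cases hj0 : j = 0
    · subst hj0
      exact r4 i hi
    by_cases hin : i = n - 1
    · subst hin
      exact r3 j hj
    exact key (fun i j => (i : ℤ) + j) (by
        rintro ⟨⟨i, hi⟩, ⟨j, hj⟩⟩ ⟨⟨i', hi'⟩, ⟨j', hj'⟩⟩ h
        simp only [gridA, gridR] at h ⊢
        omega) (r4 0 (by omega)) (r3 (b - 1) (by omega))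
      ((walk_right (j' := j) (by omega) (by omega) (by omega) (by omega)).trans
        (walk_down (by omega) (by omega) (by omega) (by omega)))
      ((walk_right (j' := b - 1) (by omega) (by omega) (by omega) (by omega)).trans
        (walk_down (by omega) (by omega) (by omega) (by omega))) (by push_cast; omega)
  · by_cases hj0 : j = m - 1
    · subst hj0
      exact r2 i hi
    by_cases hin : i = 0
    · subst hin
      exact r1 j (by omega) hj
    exact key (fun i j => -(i : ℤ) - j) (by
        rintro ⟨⟨i, hi⟩, ⟨j, hj⟩⟩ ⟨⟨i', hi'⟩, ⟨j', hj'⟩⟩ h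
        simp only [gridA, gridR] at h ⊢
        omega) (r3 (m - 1) (by omega)) hE2
      ((walk_left (j' := j) (by omega) (by omega) (by omega) (by omega)).trans
        (walk_up (by omega) (by omega) (by omega) (by omega)))
      ((walk_left (j' := b) (by omega) (by omega) (by omega) (by omega)).trans
        (walk_up (by omega) (by omega) (by omega) (by omega))) (by push_cast; omega)

/-- Realizable values `nb` in the strong convexity spectrum of `P_n □ P_m`,
for `m/2 ≤ b ≤ m - 1`. -/
theorem nb_mem_strongConvexitySpectrum_grid (n m : ℕ) (hn : 4 ≤ n) (hm : 4 ≤ m)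
    (b : ℕ) (hbl : m ≤ 2 * b) (hbu : b ≤ m - 1) :
    n * b ∈ strongConvexitySpectrum (gridGraph n m) := by
  have hn2 : 2 ≤ n := by omega
  have hbm : b < m := by omega
  have hb2 : 2 ≤ b := by omega
  refine ⟨gridA n m b, gridA_orient n m b, gridA_strong hn2 hbm hb2, ?_⟩
  have hcard := leftPart_ncard n m b hbm.le
  apply IsGreatest.csSup_eq
  constructor
  · refine ⟨leftPart n m b, leftPart_convex hn2 hbm hb2, ?_, hcard⟩
    intro h
    have : ((⟨0, by omega⟩, ⟨b, hbm⟩) : Fin n × Fin m) ∈ leftPart n m b := by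
      rw [h]; trivial
    simp [leftPart] at this
  · rintro k ⟨S, hS, hne, rfl⟩
    by_cases h1 : S ⊆ leftPart n m b
    · rw [← hcard]
      exact Set.ncard_le_ncard h1
    · obtain ⟨v, hv, hvC⟩ := Set.not_subset.mp h1
      have h2 : S ⊆ (leftPart n m b)ᶜ := fun u hu huC =>
        hne (mixed_univ hn2 hbm hb2 S hS hu hv huC hvC)
      have h3 := Set.ncard_le_ncard h2
      have h4 := Set.ncard_add_ncard_compl (leftPart n m b)
      rw [hcard, Nat.card_prod, Nat.card_fin, Nat.card_fin] at h4
      have h5 : n * m ≤ n * (2 * b) := Nat.mul_le_mul_left n hbl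
      have h6 : n * (2 * b) = n * b + n * b := by ring
      omega
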